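/- arXiv:1811.09505 — 2 statements merged into one kernel-verified Lean document; each statement's English description precedes it below -/
import Mathlib

section
/- Let ĥ₁ ≤ ĥ₂ ≤ ĥ₃ be real numbers with ĥ₁ < 0 and ĥ₁ + ĥ₂ + ĥ₃ ≥ 0. Define h₁ˡⁱᵐ = 0, h₂ˡⁱᵐ = max{0, ĥ₂ − (h₁ˡⁱᵐ − ĥ₁)/2}, and h₃ˡⁱᵐ = ĥ₃ − (h₁ˡⁱᵐ − ĥ₁) − (h₂ˡⁱᵐ − ĥ₂). Then h₁ˡⁱᵐ ≥ 0, h₂ˡⁱᵐ ≥ 0 and h₃ˡⁱᵐ ≥ 0; i.e., the positive-depth operator produces nonnegative nodal values whenever the cell mean of the fluid depth is nonnegative. -/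
/-- The positive-depth operator of Bunya et al. produces nonnegative nodal values
whenever the cell mean of the fluid depth is nonnegative. -/
theorem positive_depth_operator_nonneg
    (hhat₁ hhat₂ hhat₃ : ℝ) (h12 : hhat₁ ≤ hhat₂) (h23 : hhat₂ ≤ hhat₃)
    (hneg : hhat₁ < 0) (hmean : 0 ≤ hhat₁ + hhat₂ + hhat₃)
    (hlim₁ hlim₂ hlim₃ : ℝ)
    (H1 : hlim₁ = 0)
    (H2 : hlim₂ = max 0 (hhat₂ - (hlim₁ - hhat₁) / 2))
    (H3 : hlim₃ = hhat₃ - (hlim₁ - hhat₁) - (hlim₂ - hhat₂)) :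
    0 ≤ hlim₁ ∧ 0 ≤ hlim₂ ∧ 0 ≤ hlim₃ := by
  subst H1
  refine ⟨le_refl _, by rw [H2]; exact le_max_left _ _, ?_⟩
  rcases le_total (hhat₂ - (0 - hhat₁) / 2) 0 with h | h
  · rw [max_eq_left h] at H2
    linarith
  · rw [max_eq_right h] at H2
    linarith
end

section
/- Let g > 0, H₀ > 0, 0 < r₀ < a, set A = (a⁴ − r₀⁴)/(a⁴ + r₀⁴) and ω = √(8 g H₀)/a, and define D(t) = 1 − A cos(ωt), the bathymetry b(x,y) = H₀ (x² + y²)/a², the fluid depth h(x,y,t) = H₀ ( √(1 − A²)/D(t) − (x² + y²)(1 − A²)/(a² D(t)²) ), and the velocity field (u,v)(x,y,t) = (ω A sin(ωt))/(2 D(t)) · (x, y). Then at every point (x,y,t) with h(x,y,t) > 0 these functions satisfy the two-dimensional shallow water equations: ∂_t h + ∂_x(hu) + ∂_y(hv) = 0; ∂_t(hu) + ∂_x(hu² + (g/2)h²) + ∂_y(huv) = −g h ∂_x b; ∂_t(hv) + ∂_x(huv) + ∂_y(hv² + (g/2)h²) = −g h ∂_y b; i.e., the radially symmetric long-wave resonance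 solution of Thacker in a paraboloid basin is an exact solution of the shallow water equations in the wet region. -/
theorem thacker_aux (g β : ℝ) (P Q K : ℝ → ℝ) (Pdot Qdot Kdot x y t : ℝ)
    (hP : HasDerivAt P Pdot t) (hQ : HasDerivAt Q Qdot t) (hK : HasDerivAt K Kdot t)
    (eP : Pdot = -2 * K t * P t) (eQ : Qdot = -4 * K t * Q t)
    (eK : Kdot = 2 * g * Q t - K t ^ 2 - 2 * g * β) :
    (deriv (fun τ => P τ - Q τ * (x ^ 2 + y ^ 2)) t
      + deriv (fun s => (P t - Q t * (s ^ 2 + y ^ 2)) * (K t * s)) x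
      + deriv (fun s => (P t - Q t * (x ^ 2 + s ^ 2)) * (K t * s)) y = 0) ∧
    (deriv (fun τ => (P τ - Q τ * (x ^ 2 + y ^ 2)) * (K τ * x)) t
      + deriv (fun s => (P t - Q t * (s ^ 2 + y ^ 2)) * (K t * s) ^ 2
          + g / 2 * (P t - Q t * (s ^ 2 + y ^ 2)) ^ 2) x
      + deriv (fun s => (P t - Q t * (x ^ 2 + s ^ 2)) * (K t * x) * (K t * s)) y
      = -(g * (P t - Q t * (x ^ 2 + y ^ 2)) * deriv (fun s => β * (s ^ 2 + y ^ 2)) x)) ∧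
    (deriv (fun τ => (P τ - Q τ * (x ^ 2 + y ^ 2)) * (K τ * y)) t
      + deriv (fun s => (P t - Q t * (s ^ 2 + y ^ 2)) * (K t * s) * (K t * y)) x
      + deriv (fun s => (P t - Q t * (x ^ 2 + s ^ 2)) * (K t * s) ^ 2
          + g / 2 * (P t - Q t * (x ^ 2 + s ^ 2)) ^ 2) y
      = -(g * (P t - Q t * (x ^ 2 + y ^ 2)) * deriv (fun s => β * (x ^ 2 + s ^ 2)) y)) := by
  have hx2 : ∀ c z : ℝ, HasDerivAt (fun s : ℝ => s ^ 2 + c) (2 * z) z := fun c z => by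
    simpa using (hasDerivAt_pow 2 z).add_const c
  have hy2 : ∀ c z : ℝ, HasDerivAt (fun s : ℝ => c + s ^ 2) (2 * z) z := fun c z => by
    simpa using (hasDerivAt_pow 2 z).const_add c
  have hl : ∀ z : ℝ, HasDerivAt (fun s : ℝ => K t * s) (K t) z := fun z => by
    simpa using (hasDerivAt_id z).const_mul (K t)
  have ht := hP.fun_sub (hQ.mul_const (x ^ 2 + y ^ 2))
  have hx := ((hx2 (y ^ 2) x).const_mul (Q t)).const_sub (P t)
  have hy := ((hy2 (x ^ 2) y).const_mul (Q t)).const_sub (P t)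
  refine ⟨?_, ?_, ?_⟩
  · rw [ht.deriv, (hx.fun_mul (hl x)).deriv, (hy.fun_mul (hl y)).deriv, eP, eQ]
    ring
  · rw [(ht.fun_mul (hK.mul_const x)).deriv,
      ((hx.fun_mul ((hl x).fun_pow 2)).fun_add ((hx.fun_pow 2).const_mul (g / 2))).deriv,
      ((hy.mul_const (K t * x)).fun_mul (hl y)).deriv,
      ((hx2 (y ^ 2) x).const_mul β).deriv, eP, eQ, eK]
    push_cast
    ring
  · rw [(ht.fun_mul (hK.mul_const y)).deriv,
      ((hy.fun_mul ((hl y).fun_pow 2)).fun_add ((hy.fun_pow 2).const_mul (g / 2))).deriv,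
      ((hx.fun_mul (hl x)).mul_const (K t * y)).deriv,
      ((hy2 (x ^ 2) y).const_mul β).deriv, eP, eQ, eK]
    push_cast
    ring

/-- Thacker's radially symmetric long-wave resonance solution in a paraboloid basin
is an exact solution of the two-dimensional shallow water equations in the wet
region: with `A = (a⁴ − r₀⁴)/(a⁴ + r₀⁴)`, `ω = √(8 g H₀)/a`, `D t = 1 − A cos ωt`,
bathymetry `b = H₀ (x² + y²)/a²`, depth
`h = H₀ (√(1 − A²)/D − (x² + y²)(1 − A²)/(a² D²))` and velocity
`(u,v) = (ω A sin ωt)/(2 D) · (x, y)`, the shallow water equations hold at every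
point `(x,y,t)` where `h > 0`. -/
theorem thacker_long_wave_resonance_exact_solution
    (g H₀ r₀ a : ℝ) (hg : 0 < g) (hH₀ : 0 < H₀) (hr₀ : 0 < r₀) (hra : r₀ < a) :
    let A : ℝ := (a ^ 4 - r₀ ^ 4) / (a ^ 4 + r₀ ^ 4)
    let ω : ℝ := Real.sqrt (8 * g * H₀) / a
    let D : ℝ → ℝ := fun t => 1 - A * Real.cos (ω * t)
    let b : ℝ → ℝ → ℝ := fun x y => H₀ * (x ^ 2 + y ^ 2) / a ^ 2
    let h : ℝ → ℝ → ℝ → ℝ := fun x y t =>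
      H₀ * (Real.sqrt (1 - A ^ 2) / D t
        - (x ^ 2 + y ^ 2) * (1 - A ^ 2) / (a ^ 2 * (D t) ^ 2))
    let u : ℝ → ℝ → ℝ := fun x t => ω * A * Real.sin (ω * t) / (2 * D t) * x
    let v : ℝ → ℝ → ℝ := fun y t => ω * A * Real.sin (ω * t) / (2 * D t) * y
    ∀ x y t : ℝ, 0 < h x y t →
      -- mass equation: ∂ₜh + ∂ₓ(hu) + ∂_y(hv) = 0
      (deriv (fun τ => h x y τ) t
        + deriv (fun s => h s y t * u s t) x
        + deriv (fun s => h x s t * v s t) y = 0) ∧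
      -- x-momentum: ∂ₜ(hu) + ∂ₓ(hu² + (g/2)h²) + ∂_y(huv) = −g h ∂ₓb
      (deriv (fun τ => h x y τ * u x τ) t
        + deriv (fun s => h s y t * (u s t) ^ 2 + g / 2 * (h s y t) ^ 2) x
        + deriv (fun s => h x s t * u x t * v s t) y
        = -(g * h x y t * deriv (fun s => b s y) x)) ∧
      -- y-momentum: ∂ₜ(hv) + ∂ₓ(huv) + ∂_y(hv² + (g/2)h²) = −g h ∂_y b
      (deriv (fun τ => h x y τ * v y τ) t
        + deriv (fun s => h s y t * u s t * v y t) x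
        + deriv (fun s => h x s t * (v s t) ^ 2 + g / 2 * (h x s t) ^ 2) y
        = -(g * h x y t * deriv (fun s => b x s) y)) := by
  intro A ω D b h u v x y t _
  have ha : 0 < a := hr₀.trans hra
  have ha4 : 0 < a ^ 4 := by positivity
  have hr4 : 0 < r₀ ^ 4 := by positivity
  have hlt : r₀ ^ 4 < a ^ 4 := by gcongr
  have hA0 : 0 < A := div_pos (by linarith) (by linarith)
  have hA1 : A < 1 := (div_lt_one (by linarith)).2 (by linarith)
  have hω : ω ^ 2 = 8 * g * H₀ / a ^ 2 := by
    simp only [ω]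
    rw [div_pow, Real.sq_sqrt (by positivity)]
  clear_value A ω
  have hDpos : 0 < D t := by
    have := Real.cos_le_one (ω * t)
    simp only [D]
    nlinarith
  have hDne : D t ≠ 0 := hDpos.ne'
  have hlin : HasDerivAt (fun τ : ℝ => ω * τ) ω t := by
    simpa using (hasDerivAt_id t).const_mul ω
  have hD : HasDerivAt D (ω * A * Real.sin (ω * t)) t :=
    ((hlin.cos.const_mul A).const_sub 1).congr_deriv (by ring)
  have hN : HasDerivAt (fun τ => ω * A * Real.sin (ω * τ)) (ω ^ 2 * (1 - D t)) t :=
    (hlin.sin.const_mul (ω * A)).congr_deriv (by simp only [D]; ring)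
  have hsc : (ω * A * Real.sin (ω * t)) ^ 2 = ω ^ 2 * (A ^ 2 - (1 - D t) ^ 2) := by
    simp only [D]
    linear_combination ω ^ 2 * A ^ 2 * Real.sin_sq_add_cos_sq (ω * t)
  set P : ℝ → ℝ := fun τ => H₀ * Real.sqrt (1 - A ^ 2) / D τ with hPd
  set Q : ℝ → ℝ := fun τ => H₀ * (1 - A ^ 2) / a ^ 2 / (D τ) ^ 2 with hQd
  set K : ℝ → ℝ := fun τ => ω * A * Real.sin (ω * τ) / (2 * D τ) with hKd
  have hh : h = fun x y t => P t - Q t * (x ^ 2 + y ^ 2) := by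
    funext x y t
    simp only [h, P, Q, div_eq_mul_inv, mul_inv]
    ring
  have hb : b = fun x y => H₀ / a ^ 2 * (x ^ 2 + y ^ 2) := by
    funext x y
    simp only [b]
    ring
  have hu : u = fun x t => K t * x := rfl
  have hv : v = fun x t => K t * x := rfl
  have dP := (hasDerivAt_const t (H₀ * Real.sqrt (1 - A ^ 2))).fun_div hD hDne
  have dQ := (hasDerivAt_const t (H₀ * (1 - A ^ 2) / a ^ 2)).fun_div (hD.fun_pow 2)
    (pow_ne_zero 2 hDne)
  have dK := hN.fun_div (hD.const_mul 2) (mul_ne_zero two_ne_zero hDne)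
  rw [hh, hb, hu, hv]
  clear_value D
  refine thacker_aux g (H₀ / a ^ 2) P Q K _ _ _ x y t dP dQ dK ?_ ?_ ?_
  · simp only [P, K]
    field_simp
    ring
  · simp only [Q, K]
    field_simp
    ring
  · simp only [Q, K]
    generalize ω * A * Real.sin (ω * t) = N at *
    have e2 : N ^ 2 = 8 * g * H₀ / a ^ 2 * (A ^ 2 - (1 - D t) ^ 2) := by rw [hsc, hω]
    rw [hω]
    rw [div_pow, e2]
    have e3 : 8 * g * H₀ / a ^ 2 * (1 - D t) * (2 * D t) - N * (2 * N)
        = 8 * g * H₀ / a ^ 2 * (1 - D t) * (2 * D t)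
          - 2 * (8 * g * H₀ / a ^ 2 * (A ^ 2 - (1 - D t) ^ 2)) := by rw [← e2]; ring
    rw [e3]
    field_simp
    ring
end
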